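/- Let K > 0 and let p ∈ H²(𝕋, ℝ) satisfy ‖p‖₂ ≤ K and ‖p'‖_{C⁰} < 1/2. Then for all positive integers n and s there exists a constant C(s,K) > 0 such that for every u ∈ H^{s}(𝕋) with p ∈ H^{s+1}(𝕋): | ∫_𝕋 u(x) e^{in(x+p(x))} dx | ≤ (C(s,K)/n^s) ( ‖u‖_s + ‖p‖_{s+1}‖u‖₁ ). -/

import Mathlib

/-!
The proof is non-stationary phase with tame estimates, done for trigonometric polynomials and then
passed to the limit.

Let `φ = x + p` and `w = 1 / φ'`. One integration by parts gives
`|∫ f e^{inφ}| = n⁻¹ |∫ (w f)' e^{inφ}|`, so after `s = m + 1` steps one needs an `L¹` bound on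
`(∂ ∘ w)^s u` that is linear in the high norms `‖u‖_s`, `‖p‖_{s+1}`. Interpolation is encoded by a
single frequency scale `Λ ≥ 1` with `Λ^{s-1} ≈ 1 + ‖p‖_{s+1} / K`: splitting frequencies at `Λ`
(`jb_interp`) shows that `u` satisfies
`‖u⁽ᵃ⁾‖_∞ ≲ M Λᵃ` and `‖u⁽ᵃ⁺¹⁾‖_{L¹} ≲ M Λᵃ` for `a ≤ m`, with `M = ‖u‖₁ + Λ^{-m} ‖u‖_s`,
and that `p'` satisfies the same bounds with `M` replaced by a multiple of `K`. This is the
predicate `Tame` (`tame_of_sobolev`).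

The class `Tame Λ m` is stable under products (`Tame.mul`) and under `g ↦ 1 / (1 + g)`
(`exists_tame_inv`), with constants independent of `Λ`, and each derivative costs one factor `Λ`.
Hence `s` integrations by parts (`oscillatory_bound`) give
`C n^{-s} M Λ^m = C n^{-s} (Λ^m ‖u‖₁ + ‖u‖_s)`, which is the claim by the choice of `Λ`.

For general `u` and `p` the Fourier series are truncated to finite sets of frequencies. The Sobolev
norms of the truncations are dominated by those of `u` and `p`; the truncations of `u`, `p` and `p'`
converge uniformly, so the truncated `p'` is eventually bounded by `3/4`, and the integrals converge.
Real parts of the truncations of `p` are taken so that the phase stays real.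
-/

open scoped Real BigOperators
open MeasureTheory

noncomputable section

def jb (j : ℤ) : ℝ := max 1 |(j : ℝ)|

def fc (u : ℝ → ℂ) (j : ℤ) : ℂ :=
  (1 / (2 * (π : ℂ))) * ∫ x in (0:ℝ)..(2 * π), u x * Complex.exp (-Complex.I * (j : ℂ) * (x : ℂ))

def fcR (u : ℝ → ℝ) (j : ℤ) : ℂ := fc (fun x => (u x : ℂ)) j

def sobNorm (s : ℝ) (u : ℝ → ℂ) : ℝ :=
  Real.sqrt (∑' j : ℤ, jb j ^ (2 * s) * ‖fc u j‖ ^ 2)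

def memHs (s : ℝ) (u : ℝ → ℂ) : Prop :=
  Summable (fun j : ℤ => jb j ^ (2 * s) * ‖fc u j‖ ^ 2)

def sobNormR (s : ℝ) (u : ℝ → ℝ) : ℝ := sobNorm s (fun x => (u x : ℂ))
def memHsR (s : ℝ) (u : ℝ → ℝ) : Prop := memHs s (fun x => (u x : ℂ))

def pairNorm (s : ℝ) (a b : ℝ → ℝ) : ℝ := sobNormR s a + sobNormR s b

def seqNorm (s : ℝ) (c : ℤ → ℂ) : ℝ :=
  Real.sqrt (∑' j : ℤ, jb j ^ (2 * s) * ‖c j‖ ^ 2)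

def memSeq (s : ℝ) (c : ℤ → ℂ) : Prop :=
  Summable (fun j : ℤ => jb j ^ (2 * s) * ‖c j‖ ^ 2)

def smoothPer (u : ℝ → ℝ) : Prop :=
  ContDiff ℝ (⊤ : ℕ∞) u ∧ Function.Periodic u (2 * π)

def J1 (θ : ℝ) : ℝ :=
  ((1 / (2 * (π : ℂ))) * ∫ φ in (0:ℝ)..(2 * π),
    Complex.exp (Complex.I * (θ : ℂ) * (Real.sin φ : ℂ)) * Complex.exp (-Complex.I * (φ : ℂ))).re

/-! ### Tame classes and repeated integration by parts -/

/-- Smooth `2π`-periodic complex-valued functions. -/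
def SmoothPer (f : ℝ → ℂ) : Prop :=
  ContDiff ℝ (⊤ : ℕ∞) f ∧ Function.Periodic f (2 * π)

/-- Tame control at frequency scale `Λ`: for smooth `f`, `Tame Λ m A f` says that
`‖f⁽ᵃ⁾‖_∞ ≤ A Λᵃ` and `‖f⁽ᵃ⁺¹⁾‖_{L¹} ≤ A Λᵃ` for `0 ≤ a ≤ m`. -/
def Tame (Λ : ℝ) : ℕ → ℝ → (ℝ → ℂ) → Prop
  | 0, A, f => (∀ x, ‖f x‖ ≤ A) ∧ ∫ x in (0:ℝ)..(2 * π), ‖deriv f x‖ ≤ A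
  | m + 1, A, f => ((∀ x, ‖f x‖ ≤ A) ∧ ∫ x in (0:ℝ)..(2 * π), ‖deriv f x‖ ≤ A) ∧
      Tame Λ m (A * Λ) (deriv f)

namespace SmoothPer

variable {f g : ℝ → ℂ}

lemma differentiable (hf : SmoothPer f) : Differentiable ℝ f :=
  hf.1.differentiable (by simp)

lemma hasDerivAt (hf : SmoothPer f) (x : ℝ) : HasDerivAt f (deriv f x) x :=
  (hf.differentiable x).hasDerivAt

lemma continuous (hf : SmoothPer f) : Continuous f := hf.1.continuous

lemma deriv (hf : SmoothPer f) : SmoothPer (deriv f) := by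
  refine ⟨(contDiff_infty_iff_deriv.1 hf.1).2, fun x => ?_⟩
  rw [← deriv_comp_add_const]
  congr 1
  exact funext hf.2

lemma mul (hf : SmoothPer f) (hg : SmoothPer g) : SmoothPer (fun x => f x * g x) :=
  ⟨hf.1.mul hg.1, fun x => by simp only [hf.2 x, hg.2 x]⟩

lemma neg (hf : SmoothPer f) : SmoothPer (fun x => - f x) :=
  ⟨hf.1.neg, fun x => by simp only [hf.2 x]⟩

lemma deriv_mul (hf : SmoothPer f) (hg : SmoothPer g) :
    _root_.deriv (fun x => f x * g x) =
      fun x => _root_.deriv f x * g x + f x * _root_.deriv g x :=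
  funext fun x => ((hf.hasDerivAt x).mul (hg.hasDerivAt x)).deriv

lemma intervalIntegrable_norm (hf : SmoothPer f) :
    IntervalIntegrable (fun x => ‖f x‖) volume 0 (2 * π) :=
  hf.continuous.norm.intervalIntegrable _ _

end SmoothPer

namespace Tame

variable {Λ A B : ℝ} {m : ℕ} {f g : ℝ → ℂ}

lemma sup (h : Tame Λ m A f) (x : ℝ) : ‖f x‖ ≤ A := by
  cases m with
  | zero => exact h.1 x
  | succ m => exact h.1.1 x

lemma int (h : Tame Λ m A f) : ∫ x in (0:ℝ)..(2 * π), ‖deriv f x‖ ≤ A := by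
  cases m with
  | zero => exact h.2
  | succ m => exact h.1.2

lemma nonneg (h : Tame Λ m A f) : 0 ≤ A := (norm_nonneg _).trans (h.sup 0)

lemma pred (h : Tame Λ (m + 1) A f) : Tame Λ m A f := by
  induction m generalizing A f with
  | zero => exact h.1
  | succ m ih => exact ⟨h.1, ih h.2⟩

lemma mono (hΛ : 1 ≤ Λ) (h : Tame Λ m A f) (hAB : A ≤ B) : Tame Λ m B f := by
  induction m generalizing A B f with
  | zero => exact ⟨fun x => (h.1 x).trans hAB, h.2.trans hAB⟩
  | succ m ih =>
    exact ⟨⟨fun x => (h.1.1 x).trans hAB, h.1.2.trans hAB⟩,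
      ih h.2 (mul_le_mul_of_nonneg_right hAB (by linarith))⟩

lemma add (hf : SmoothPer f) (hg : SmoothPer g) (h : Tame Λ m A f) (k : Tame Λ m B g) :
    Tame Λ m (A + B) (fun x => f x + g x) := by
  have key : ∀ {A B : ℝ} {f g : ℝ → ℂ}, SmoothPer f → SmoothPer g → Tame Λ 0 A f →
      Tame Λ 0 B g → Tame Λ 0 (A + B) (fun x => f x + g x) := by
    intro A B f g hf hg h k
    refine ⟨fun x => (norm_add_le _ _).trans (add_le_add (h.1 x) (k.1 x)), ?_⟩
    have e : deriv (fun x => f x + g x) = fun x => deriv f x + deriv g x :=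
      funext fun x => ((hf.hasDerivAt x).add (hg.hasDerivAt x)).deriv
    rw [e]
    refine le_trans ?_ (add_le_add h.2 k.2)
    rw [← intervalIntegral.integral_add hf.deriv.intervalIntegrable_norm
      hg.deriv.intervalIntegrable_norm]
    exact intervalIntegral.integral_mono_on (by positivity)
      ((hf.deriv.continuous.add hg.deriv.continuous).norm.intervalIntegrable _ _)
      (hf.deriv.intervalIntegrable_norm.add hg.deriv.intervalIntegrable_norm)
      (fun x _ => norm_add_le _ _)
  induction m generalizing A B f g with
  | zero => exact key hf hg h k
  | succ m ih =>
    refine ⟨key hf hg h.1 k.1, ?_⟩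
    have e : deriv (fun x => f x + g x) = fun x => deriv f x + deriv g x :=
      funext fun x => ((hf.hasDerivAt x).add (hg.hasDerivAt x)).deriv
    rw [e, add_mul]
    exact ih hf.deriv hg.deriv h.2 k.2

lemma neg (h : Tame Λ m A f) : Tame Λ m A (fun x => - f x) := by
  induction m generalizing A f with
  | zero => exact ⟨fun x => by simpa using h.1 x, by simpa using h.2⟩
  | succ m ih =>
    refine ⟨⟨fun x => by simpa using h.1.1 x, by simpa using h.1.2⟩, ?_⟩
    have e : deriv (fun x => - f x) = fun x => - deriv f x := by
      funext x; simp
    rw [e]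
    exact ih h.2

/-- The tame classes form an algebra: in each Leibniz term at most one factor is measured in `L¹`,
and the powers of `Λ` add up correctly. -/
lemma mul (hΛ : 1 ≤ Λ) (hf : SmoothPer f) (hg : SmoothPer g) (h : Tame Λ m A f)
    (k : Tame Λ m B g) : Tame Λ m (2 ^ (m + 1) * (A * B)) (fun x => f x * g x) := by
  have key : ∀ {A B : ℝ} {f g : ℝ → ℂ}, SmoothPer f → SmoothPer g → Tame Λ 0 A f →
      Tame Λ 0 B g → Tame Λ 0 (2 * (A * B)) (fun x => f x * g x) := by
    intro A B f g hf hg h k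
    have hA := h.nonneg
    have hB := k.nonneg
    refine ⟨fun x => ?_, ?_⟩
    · rw [norm_mul]
      nlinarith [mul_le_mul (h.1 x) (k.1 x) (norm_nonneg _) hA, mul_nonneg hA hB]
    · rw [hf.deriv_mul hg]
      have h1 : ∫ x in (0:ℝ)..(2 * π), ‖deriv f x * g x + f x * deriv g x‖ ≤
          ∫ x in (0:ℝ)..(2 * π), (‖deriv f x‖ * B + A * ‖deriv g x‖) := by
        refine intervalIntegral.integral_mono_on (by positivity)
          (((hf.deriv.mul hg).continuous.add (hf.mul hg.deriv).continuous).norm.intervalIntegrable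
            _ _)
          ((hf.deriv.intervalIntegrable_norm.mul_const _).add
            (hg.deriv.intervalIntegrable_norm.const_mul _)) (fun x _ => ?_)
        refine (norm_add_le _ _).trans ?_
        rw [norm_mul, norm_mul]
        exact add_le_add (mul_le_mul_of_nonneg_left (k.1 x) (norm_nonneg _))
          (mul_le_mul_of_nonneg_right (h.1 x) (norm_nonneg _))
      rw [intervalIntegral.integral_add (hf.deriv.intervalIntegrable_norm.mul_const _)
        (hg.deriv.intervalIntegrable_norm.const_mul _), intervalIntegral.integral_mul_const,
        intervalIntegral.integral_const_mul] at h1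
      nlinarith [mul_le_mul_of_nonneg_right h.2 hB, mul_le_mul_of_nonneg_left k.2 hA]
  induction m generalizing A B f g with
  | zero => simpa using key hf hg h k
  | succ m ih =>
    have hAB : 0 ≤ A * B := mul_nonneg h.nonneg k.nonneg
    refine ⟨(key hf hg (mono hΛ (m := 0) h.1 le_rfl) k.1).mono hΛ ?_, ?_⟩
    · refine mul_le_mul_of_nonneg_right ?_ hAB
      calc (2:ℝ) = 2 ^ 1 := by norm_num
        _ ≤ 2 ^ (m + 1 + 1) := pow_le_pow_right₀ (by norm_num) (by omega)
    · rw [hf.deriv_mul hg]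
      have a1 := ih hf.deriv hg h.2 k.pred
      have a2 := ih hf hg.deriv h.pred k.2
      refine (add (hf.deriv.mul hg) (hf.mul hg.deriv) a1 a2).mono hΛ (le_of_eq ?_)
      ring

lemma re (hf : SmoothPer f) (h : Tame Λ m A f) : Tame Λ m A (fun x => ((f x).re : ℂ)) := by
  have e : ∀ {f : ℝ → ℂ}, SmoothPer f →
      deriv (fun x => ((f x).re : ℂ)) = fun x => ((deriv f x).re : ℂ) := fun hf => funext fun x =>
    ((Complex.ofRealCLM.hasFDerivAt.comp_hasDerivAt x
      (Complex.reCLM.hasFDerivAt.comp_hasDerivAt x (hf.hasDerivAt x)))).deriv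
  have key : ∀ {A : ℝ} {f : ℝ → ℂ}, SmoothPer f → Tame Λ 0 A f →
      Tame Λ 0 A (fun x => ((f x).re : ℂ)) := by
    intro A f hf h
    have hn : ∀ z : ℂ, ‖((z.re : ℝ) : ℂ)‖ ≤ ‖z‖ := fun z => by
      rw [Complex.norm_real]; exact Complex.abs_re_le_norm z
    refine ⟨fun x => (hn _).trans (h.1 x), le_trans ?_ h.2⟩
    rw [e hf]
    exact intervalIntegral.integral_mono_on (by positivity)
      ((Complex.continuous_ofReal.comp
        (Complex.continuous_re.comp hf.deriv.continuous)).norm.intervalIntegrable _ _)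
      hf.deriv.intervalIntegrable_norm (fun x _ => hn _)
  induction m generalizing A f with
  | zero => exact key hf h
  | succ m ih =>
    refine ⟨key hf h.1, ?_⟩
    rw [e hf]
    exact ih hf.deriv h.2

end Tame

lemma SmoothPer.re {f : ℝ → ℂ} (hf : SmoothPer f) : SmoothPer (fun x => ((f x).re : ℂ)) :=
  ⟨Complex.ofRealCLM.contDiff.comp (Complex.reCLM.contDiff.comp hf.1),
    fun x => by simp only [hf.2 x]⟩

/-- The reciprocal of `1 + g` inherits tame bounds from `g`, through `w' = -g' w²`. The bound does
not depend on `Λ`. -/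
lemma exists_tame_inv (m : ℕ) (B : ℝ) : ∃ D : ℝ, 0 ≤ D ∧ ∀ (Λ : ℝ), 1 ≤ Λ → ∀ g w : ℝ → ℂ,
    SmoothPer g → SmoothPer w → (∀ x, w x * (1 + g x) = 1) → (∀ x, ‖w x‖ ≤ 4) →
    Tame Λ m B g → Tame Λ m D w := by
  have e : ∀ {g w : ℝ → ℂ}, SmoothPer g → SmoothPer w → (∀ x, w x * (1 + g x) = 1) →
      deriv w = fun x => - (deriv g x * (w x * w x)) := by
    intro g w hg hw h
    funext x
    have h1 := ((hw.hasDerivAt x).mul ((hg.hasDerivAt x).const_add 1)).unique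
      ((hasDerivAt_const x (1:ℂ)).congr_of_eventuallyEq (Filter.Eventually.of_forall h))
    have h2 := h x
    linear_combination (w x) * h1 - (deriv w x) * h2
  have key : ∀ {Λ B : ℝ} {g w : ℝ → ℂ}, SmoothPer g → SmoothPer w →
      (∀ x, w x * (1 + g x) = 1) → (∀ x, ‖w x‖ ≤ 4) → Tame Λ 0 B g →
      Tame Λ 0 (4 + 16 * B) w := by
    intro Λ B g w hg hw h h4 hB
    have := hB.nonneg
    refine ⟨fun x => (h4 x).trans (by linarith), ?_⟩
    have h1 : ∫ x in (0:ℝ)..(2 * π), ‖deriv w x‖ ≤ ∫ x in (0:ℝ)..(2 * π), ‖deriv g x‖ * 16 := by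
      refine intervalIntegral.integral_mono_on (by positivity) hw.deriv.intervalIntegrable_norm
        (hg.deriv.intervalIntegrable_norm.mul_const _) (fun x _ => ?_)
      rw [e hg hw h]
      simp only [norm_neg, norm_mul]
      refine mul_le_mul_of_nonneg_left ?_ (norm_nonneg _)
      nlinarith [h4 x, norm_nonneg (w x)]
    rw [intervalIntegral.integral_mul_const] at h1
    linarith [hB.2]
  induction m with
  | zero =>
    refine ⟨4 + 16 * |B|, by positivity, fun Λ hΛ g w hg hw h h4 hB =>
      (key hg hw h h4 hB).mono hΛ ?_⟩
    linarith [le_abs_self B]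
  | succ m ih =>
    obtain ⟨D, hD, H⟩ := ih
    refine ⟨4 + 16 * |B| + 2 ^ (m + 1) * (|B| * (2 ^ (m + 1) * (D * D))), by positivity,
      fun Λ hΛ g w hg hw h h4 hB => ⟨?_, ?_⟩⟩
    · refine (key hg hw h h4 hB.1).mono hΛ ?_
      have : 0 ≤ 2 ^ (m + 1) * (|B| * (2 ^ (m + 1) * (D * D))) := by positivity
      linarith [le_abs_self B]
    · have hw' := H Λ hΛ g w hg hw h h4 hB.pred
      rw [e hg hw h]
      refine (((hB.2).mul hΛ hg.deriv (hw.mul hw) (hw'.mul hΛ hw hw hw')).neg).mono hΛ ?_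
      have hB0 := hB.nonneg
      rw [abs_of_nonneg hB0]
      have : 0 ≤ (4 + 16 * B) * Λ := by positivity
      nlinarith

/-- Repeated integration by parts against `e^{inφ}`, where `φ' = 1 / w`. -/
lemma oscillatory_bound {Λ D : ℝ} (hΛ : 1 ≤ Λ) {n : ℕ} (hn : 0 < n) {φ : ℝ → ℝ} {w : ℝ → ℂ}
    (hφ : ∀ x, HasDerivAt (fun x => (φ x : ℂ)) (w x)⁻¹ x) (hφp : ∀ x, φ (x + 2 * π) = φ x + 2 * π)
    (hw : SmoothPer w) (hw0 : ∀ x, w x ≠ 0) (m : ℕ) (hD : Tame Λ m D w) {A : ℝ} {f : ℝ → ℂ}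
    (hf : SmoothPer f) (hA : Tame Λ m A f) :
    ‖∫ x in (0:ℝ)..(2 * π), f x * Complex.exp (Complex.I * (n : ℂ) * (φ x : ℂ))‖ ≤
      (2 ^ (m + 1) * D) ^ (m + 1) * A * Λ ^ m / (n : ℝ) ^ (m + 1) := by
  have hnR : (0:ℝ) < n := by exact_mod_cast hn
  have hφc : Continuous (fun x => (φ x : ℂ)) :=
    continuous_iff_continuousAt.2 fun x => (hφ x).continuousAt
  have hec : Continuous fun x => Complex.exp (Complex.I * (n : ℂ) * (φ x : ℂ)) := by fun_prop
  have hn1 : ∀ x, ‖Complex.exp (Complex.I * (n : ℂ) * (φ x : ℂ))‖ = 1 := fun x => by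
    rw [show Complex.I * (n : ℂ) * (φ x : ℂ) = ((n * φ x : ℝ) : ℂ) * Complex.I by
      push_cast; ring]
    exact Complex.norm_exp_ofReal_mul_I _
  have ibp : ∀ {f : ℝ → ℂ}, SmoothPer f →
      ‖∫ x in (0:ℝ)..(2 * π), f x * Complex.exp (Complex.I * (n : ℂ) * (φ x : ℂ))‖ =
      ‖∫ x in (0:ℝ)..(2 * π), deriv (fun x => f x * w x) x *
        Complex.exp (Complex.I * (n : ℂ) * (φ x : ℂ))‖ / n := by
    intro f hf
    have hfw := hf.mul hw
    have hd : ∀ x, HasDerivAt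
        (fun x => f x * w x * Complex.exp (Complex.I * (n : ℂ) * (φ x : ℂ)))
        (deriv (fun x => f x * w x) x * Complex.exp (Complex.I * (n : ℂ) * (φ x : ℂ)) +
          Complex.I * n * (f x * Complex.exp (Complex.I * (n : ℂ) * (φ x : ℂ)))) x := by
      intro x
      have := (hfw.hasDerivAt x).mul (((hφ x).const_mul (Complex.I * (n : ℂ))).cexp)
      refine this.congr_deriv ?_
      have := hw0 x
      field_simp
    have i1 : IntervalIntegrable (fun x => deriv (fun x => f x * w x) x *
        Complex.exp (Complex.I * (n : ℂ) * (φ x : ℂ))) volume 0 (2 * π) :=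
      (hfw.deriv.continuous.mul hec).intervalIntegrable _ _
    have i2 : IntervalIntegrable (fun x => Complex.I * n *
        (f x * Complex.exp (Complex.I * (n : ℂ) * (φ x : ℂ)))) volume 0 (2 * π) :=
      ((hf.continuous.mul hec).const_mul _).intervalIntegrable _ _
    have h1 := intervalIntegral.integral_eq_sub_of_hasDerivAt (fun x _ => hd x) (i1.add i2)
    rw [intervalIntegral.integral_add i1 i2, intervalIntegral.integral_const_mul] at h1
    have hper : f (2 * π) * w (2 * π) * Complex.exp (Complex.I * (n : ℂ) * (φ (2 * π) : ℂ)) -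
        f 0 * w 0 * Complex.exp (Complex.I * (n : ℂ) * (φ 0 : ℂ)) = 0 := by
      have a1 := hf.2 0
      have a2 := hw.2 0
      have a3 := hφp 0
      rw [zero_add] at a1 a2 a3
      rw [a1, a2, a3]
      have : Complex.I * (n : ℂ) * ((φ 0 + 2 * π : ℝ) : ℂ) =
          Complex.I * (n : ℂ) * (φ 0 : ℂ) + n * (2 * π * Complex.I) := by
        push_cast; ring
      rw [this, Complex.exp_add, Complex.exp_nat_mul_two_pi_mul_I, mul_one, sub_self]
    rw [hper] at h1
    have h2 := congrArg norm (eq_neg_of_add_eq_zero_left h1)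
    rw [norm_neg, norm_mul, norm_mul, Complex.norm_I, one_mul, Complex.norm_natCast] at h2
    rw [h2]
    field_simp
  induction m generalizing A f with
  | zero =>
    rw [ibp hf]
    have h := hA.mul hΛ hf hw hD
    have h2 : ‖∫ x in (0:ℝ)..(2 * π), deriv (fun x => f x * w x) x *
        Complex.exp (Complex.I * (n : ℂ) * (φ x : ℂ))‖ ≤ 2 ^ (0 + 1) * (A * D) := by
      refine (intervalIntegral.norm_integral_le_integral_norm (by positivity)).trans ?_
      simp only [norm_mul, hn1, mul_one]
      exact h.2
    refine (div_le_div_of_nonneg_right h2 hnR.le).trans (le_of_eq ?_)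
    ring
  | succ m ih =>
    rw [ibp hf]
    have h := (hA.mul hΛ hf hw hD).2
    have h2 := ih hD.pred (hf.mul hw).deriv h
    refine (div_le_div_of_nonneg_right h2 hnR.le).trans ?_
    rw [div_div, ← pow_succ]
    refine div_le_div_of_nonneg_right ?_ (by positivity)
    have hD0 := hD.nonneg
    have hA0 := hA.nonneg
    calc (2 ^ (m + 1) * D) ^ (m + 1) * (2 ^ (m + 1 + 1) * (A * D) * Λ) * Λ ^ m
        ≤ (2 ^ (m + 1 + 1) * D) ^ (m + 1) * (2 ^ (m + 1 + 1) * (A * D) * Λ) * Λ ^ m := by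
          gcongr <;> norm_num
      _ = _ := by ring

/-! ### Trigonometric polynomials and Sobolev norms -/

/-- The trigonometric polynomial `∑_{j ∈ F} c_j e^{ijx}`. -/
def trigSum (F : Finset ℤ) (c : ℤ → ℂ) (x : ℝ) : ℂ :=
  ∑ j ∈ F, c j * Complex.exp (Complex.I * (j : ℂ) * (x : ℂ))

/-- Fourier multiplier of `d/dx`. -/
def dcoef (c : ℤ → ℂ) (j : ℤ) : ℂ := Complex.I * j * c j

lemma norm_exp_I_int (j : ℤ) (x : ℝ) :
    ‖Complex.exp (Complex.I * (j : ℂ) * (x : ℂ))‖ = 1 := by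
  rw [show Complex.I * (j : ℂ) * (x : ℂ) = ((j * x : ℝ) : ℂ) * Complex.I by push_cast; ring]
  exact Complex.norm_exp_ofReal_mul_I _

lemma hasDerivAt_term (c : ℤ → ℂ) (j : ℤ) (x : ℝ) :
    HasDerivAt (fun x : ℝ => c j * Complex.exp (Complex.I * (j : ℂ) * (x : ℂ)))
      (dcoef c j * Complex.exp (Complex.I * (j : ℂ) * (x : ℂ))) x := by
  have h := ((((hasDerivAt_id (x : ℂ)).const_mul (Complex.I * (j : ℂ))).cexp).const_mul
    (c j)).comp_ofReal
  refine h.congr_deriv ?_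
  simp only [dcoef, id]
  ring

lemma hasDerivAt_trigSum (F : Finset ℤ) (c : ℤ → ℂ) (x : ℝ) :
    HasDerivAt (trigSum F c) (trigSum F (dcoef c) x) x :=
  HasDerivAt.fun_sum fun j _ => hasDerivAt_term c j x

lemma deriv_trigSum (F : Finset ℤ) (c : ℤ → ℂ) : deriv (trigSum F c) = trigSum F (dcoef c) :=
  funext fun x => (hasDerivAt_trigSum F c x).deriv

lemma smoothPer_trigSum (F : Finset ℤ) (c : ℤ → ℂ) : SmoothPer (trigSum F c) := by
  constructor
  · unfold trigSum
    refine ContDiff.sum fun j _ => contDiff_const.mul (ContDiff.cexp ?_)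
    exact contDiff_const.mul Complex.ofRealCLM.contDiff
  · intro x
    refine Finset.sum_congr rfl fun j _ => ?_
    congr 1
    rw [show Complex.I * (j : ℂ) * ((x + 2 * π : ℝ) : ℂ) =
      Complex.I * (j : ℂ) * (x : ℂ) + j * (2 * π * Complex.I) by push_cast; ring,
      Complex.exp_add, Complex.exp_int_mul_two_pi_mul_I, mul_one]

lemma one_le_jb (j : ℤ) : 1 ≤ jb j := le_max_left _ _

lemma abs_le_jb (j : ℤ) : |(j : ℝ)| ≤ jb j := le_max_right _ _

lemma norm_dcoef_le (c : ℤ → ℂ) (j : ℤ) : ‖dcoef c j‖ ≤ jb j * ‖c j‖ := by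
  simp only [dcoef, norm_mul, Complex.norm_I, one_mul, Complex.norm_intCast]
  exact mul_le_mul_of_nonneg_right (abs_le_jb j) (norm_nonneg _)

lemma summable_jb : Summable fun j : ℤ => (jb j ^ 2)⁻¹ := by
  have h : Summable fun j : ℤ => 1 / (j : ℝ) ^ 2 := Real.summable_one_div_int_pow.2 (by norm_num)
  refine h.congr_cofinite ?_
  refine (Set.finite_singleton (0 : ℤ)).subset fun j hj => ?_
  by_contra h0
  refine hj ?_
  have h0' : j ≠ 0 := h0
  have h1 : (1:ℝ) ≤ |(j : ℝ)| := by exact_mod_cast Int.one_le_abs h0'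
  simp [jb, max_eq_right h1]

/-- Sobolev embedding `H¹ ⊂ A(𝕋)`. -/
lemma sum_norm_sq_le (F : Finset ℤ) (c : ℤ → ℂ) :
    (∑ j ∈ F, ‖c j‖) ^ 2 ≤ (∑' j : ℤ, (jb j ^ 2)⁻¹) * ∑ j ∈ F, jb j ^ 2 * ‖c j‖ ^ 2 := by
  have h := Finset.sum_mul_sq_le_sq_mul_sq F (fun j => (jb j)⁻¹) (fun j => jb j * ‖c j‖)
  have h1 : ∀ j : ℤ, (jb j)⁻¹ * (jb j * ‖c j‖) = ‖c j‖ := fun j => by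
    have := one_le_jb j
    field_simp
  simp only [h1, mul_pow, inv_pow] at h
  refine h.trans (mul_le_mul_of_nonneg_right ?_ (Finset.sum_nonneg fun j _ => by positivity))
  exact summable_jb.sum_le_tsum F (fun j _ => by positivity)

lemma norm_trigSum_le (F : Finset ℤ) (c : ℤ → ℂ) (x : ℝ) :
    ‖trigSum F c x‖ ≤ ∑ j ∈ F, ‖c j‖ :=
  (norm_sum_le _ _).trans (Finset.sum_le_sum fun j _ => by
    rw [norm_mul, norm_exp_I_int, mul_one])

lemma integral_exp_int (k : ℤ) :
    ∫ x in (0:ℝ)..(2 * π), Complex.exp (Complex.I * (k : ℂ) * (x : ℂ)) =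
      if k = 0 then 2 * (π : ℂ) else 0 := by
  split_ifs with h
  · simp [h]
  · rw [integral_exp_mul_complex (by simp [h])]
    have : Complex.I * (k : ℂ) * ((2 * π : ℝ) : ℂ) = k * (2 * π * Complex.I) := by
      push_cast; ring
    rw [this, Complex.exp_int_mul_two_pi_mul_I]
    simp

lemma parseval_trigSum (F : Finset ℤ) (c : ℤ → ℂ) :
    ∫ x in (0:ℝ)..(2 * π), ‖trigSum F c x‖ ^ 2 = 2 * π * ∑ j ∈ F, ‖c j‖ ^ 2 := by
  have h1 : ∀ x : ℝ, ((‖trigSum F c x‖ ^ 2 : ℝ) : ℂ) = ∑ j ∈ F, ∑ k ∈ F,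
      c j * (starRingEnd ℂ) (c k) * Complex.exp (Complex.I * ((j - k : ℤ) : ℂ) * (x : ℂ)) := by
    intro x
    have : ((‖trigSum F c x‖ ^ 2 : ℝ) : ℂ) =
        trigSum F c x * (starRingEnd ℂ) (trigSum F c x) := by
      rw [Complex.mul_conj, Complex.normSq_eq_norm_sq]
    rw [this, trigSum, map_sum, Finset.sum_mul_sum]
    refine Finset.sum_congr rfl fun j _ => Finset.sum_congr rfl fun k _ => ?_
    rw [map_mul, ← Complex.exp_conj]
    simp only [map_mul, Complex.conj_I, Complex.conj_ofReal, map_intCast]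
    rw [mul_mul_mul_comm, ← Complex.exp_add]
    congr 2
    push_cast
    ring
  apply Complex.ofReal_injective
  rw [← intervalIntegral.integral_ofReal]
  simp only [h1]
  have ic : ∀ j k : ℤ, IntervalIntegrable (fun x : ℝ => c j * (starRingEnd ℂ) (c k) *
      Complex.exp (Complex.I * ((j - k : ℤ) : ℂ) * (x : ℂ))) volume 0 (2 * π) :=
    fun j k => Continuous.intervalIntegrable (by fun_prop) _ _
  rw [intervalIntegral.integral_finsetSum fun j _ =>
    Continuous.intervalIntegrable (by fun_prop) _ _]
  rw [Complex.ofReal_mul, Complex.ofReal_sum, Finset.mul_sum]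
  refine Finset.sum_congr rfl fun j hj => ?_
  rw [intervalIntegral.integral_finsetSum fun k _ => ic j k]
  simp only [intervalIntegral.integral_const_mul, integral_exp_int, sub_eq_zero]
  rw [Finset.sum_eq_single j]
  · rw [if_pos rfl, Complex.mul_conj, Complex.normSq_eq_norm_sq]
    push_cast
    ring
  · intro k _ hk
    rw [if_neg (Ne.symm hk), mul_zero]
  · exact fun h => absurd hj h

lemma integral_norm_trigSum_le (F : Finset ℤ) (c : ℤ → ℂ) {t : ℝ} (ht : 0 ≤ t)
    (h : ∑ j ∈ F, ‖c j‖ ^ 2 ≤ t ^ 2) :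
    ∫ x in (0:ℝ)..(2 * π), ‖trigSum F c x‖ ≤ 2 * π * t := by
  have hc := (smoothPer_trigSum F c).continuous
  -- `2 r y ≤ r² + y²` for every `r > t` replaces Cauchy–Schwarz without a case split on `t = 0`.
  have key : ∀ r : ℝ, t < r → ∫ x in (0:ℝ)..(2 * π), ‖trigSum F c x‖ ≤ 2 * π * r := by
    intro r hr
    have hr0 : 0 < r := ht.trans_lt hr
    have h1 : ∫ x in (0:ℝ)..(2 * π), 2 * r * ‖trigSum F c x‖ ≤
        ∫ x in (0:ℝ)..(2 * π), (r ^ 2 + ‖trigSum F c x‖ ^ 2) :=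
      intervalIntegral.integral_mono_on (by positivity)
        ((hc.norm.const_mul _).intervalIntegrable _ _)
        (((hc.norm.pow 2).const_add _).intervalIntegrable _ _)
        (fun x _ => by nlinarith [sq_nonneg (r - ‖trigSum F c x‖)])
    rw [intervalIntegral.integral_const_mul, intervalIntegral.integral_add
      (continuous_const.intervalIntegrable _ _) (Continuous.intervalIntegrable (by fun_prop) _ _),
      parseval_trigSum] at h1
    simp only [intervalIntegral.integral_const, sub_zero, smul_eq_mul] at h1
    have h2 : t ^ 2 ≤ r ^ 2 := by nlinarith
    have h3 : 2 * π * ∑ j ∈ F, ‖c j‖ ^ 2 ≤ 2 * π * r ^ 2 :=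
      mul_le_mul_of_nonneg_left (h.trans h2) (by positivity)
    have h4 : 2 * r * ∫ x in (0:ℝ)..(2 * π), ‖trigSum F c x‖ ≤ 2 * r * (2 * π * r) := by
      linarith
    exact le_of_mul_le_mul_left h4 (by positivity)
  refine le_of_forall_gt_imp_ge_of_dense fun b hb => ?_
  have := key (b / (2 * π)) (by rw [lt_div_iff₀ (by positivity)]; linarith)
  rwa [mul_div_cancel₀ _ (by positivity)] at this

/-- The constant dominating both the `H¹ ⊂ L^∞` and the `L² ⊂ L¹` embeddings. -/
def embC : ℝ := Real.sqrt (∑' j : ℤ, (jb j ^ 2)⁻¹) + 2 * π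

lemma embC_pos : 0 < embC := by
  unfold embC; positivity

lemma tame_trigSum {Λ : ℝ} (hΛ : 1 ≤ Λ) (m : ℕ) (F : Finset ℤ) {A : ℝ} (hA : 0 ≤ A) (c : ℤ → ℂ)
    (h : ∀ a ≤ m, ∑ j ∈ F, jb j ^ (2 * (a + 1)) * ‖c j‖ ^ 2 ≤ (A * Λ ^ a) ^ 2) :
    Tame Λ m (embC * A) (trigSum F c) := by
  have key : ∀ {c : ℤ → ℂ} {A : ℝ}, 0 ≤ A → ∑ j ∈ F, jb j ^ 2 * ‖c j‖ ^ 2 ≤ A ^ 2 →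
      Tame Λ 0 (embC * A) (trigSum F c) := by
    intro c A hA h
    refine ⟨fun x => ?_, ?_⟩
    · have h1 := (sum_norm_sq_le F c).trans (mul_le_mul_of_nonneg_left h
        (tsum_nonneg fun j => by positivity))
      have h2 := Real.le_sqrt_of_sq_le h1
      rw [Real.sqrt_mul' _ (sq_nonneg A), Real.sqrt_sq hA] at h2
      refine (norm_trigSum_le F c x).trans (h2.trans (mul_le_mul_of_nonneg_right ?_ hA))
      unfold embC
      linarith [Real.pi_pos]
    · rw [deriv_trigSum]
      refine (integral_norm_trigSum_le F (dcoef c) hA ?_).trans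
        (mul_le_mul_of_nonneg_right ?_ hA)
      · refine le_trans (Finset.sum_le_sum fun j _ => ?_) h
        rw [← mul_pow]
        exact pow_le_pow_left₀ (norm_nonneg _) (norm_dcoef_le c j) 2
      · unfold embC
        linarith [Real.sqrt_nonneg (∑' j : ℤ, (jb j ^ 2)⁻¹)]
  induction m generalizing A c with
  | zero => exact key hA (by simpa using h 0 le_rfl)
  | succ m ih =>
    refine ⟨key hA (by simpa using h 0 (by omega)), ?_⟩
    rw [deriv_trigSum, mul_assoc]
    refine ih (mul_nonneg hA (by linarith)) _ fun a ha => ?_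
    refine le_trans (Finset.sum_le_sum fun j _ => ?_) ((h (a + 1) (by omega)).trans_eq (by ring))
    have := one_le_jb j
    calc jb j ^ (2 * (a + 1)) * ‖dcoef c j‖ ^ 2
        ≤ jb j ^ (2 * (a + 1)) * (jb j * ‖c j‖) ^ 2 := by
          have := norm_dcoef_le c j
          gcongr
      _ = jb j ^ (2 * (a + 1 + 1)) * ‖c j‖ ^ 2 := by ring

/-- Interpolation between `H¹` and `H^{m+1}` at the frequency threshold `Λ`. -/
lemma jb_interp {Λ : ℝ} (hΛ : 1 ≤ Λ) {a m : ℕ} (ha : a ≤ m) (j : ℤ) :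
    jb j ^ (2 * (a + 1)) * Λ ^ (2 * m) ≤
      Λ ^ (2 * a) * (jb j ^ 2 * Λ ^ (2 * m) + jb j ^ (2 * (m + 1))) := by
  have hj := one_le_jb j
  obtain ⟨b, rfl⟩ := Nat.exists_eq_add_of_le ha
  rcases le_total (jb j) Λ with h | h
  · calc jb j ^ (2 * (a + 1)) * Λ ^ (2 * (a + b))
        = jb j ^ (2 * a) * (jb j ^ 2 * Λ ^ (2 * (a + b))) := by ring
      _ ≤ Λ ^ (2 * a) * (jb j ^ 2 * Λ ^ (2 * (a + b)) + jb j ^ (2 * (a + b + 1))) := by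
        gcongr
        have : 0 ≤ jb j ^ (2 * (a + b + 1)) := by positivity
        linarith
  · calc jb j ^ (2 * (a + 1)) * Λ ^ (2 * (a + b))
        = Λ ^ (2 * a) * (jb j ^ (2 * (a + 1)) * Λ ^ (2 * b)) := by ring
      _ ≤ Λ ^ (2 * a) * (jb j ^ (2 * (a + 1)) * jb j ^ (2 * b)) := by gcongr
      _ ≤ Λ ^ (2 * a) * (jb j ^ 2 * Λ ^ (2 * (a + b)) + jb j ^ (2 * (a + b + 1))) := by
        gcongr
        have : 0 ≤ jb j ^ 2 * Λ ^ (2 * (a + b)) := by positivity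
        have e : jb j ^ (2 * (a + 1)) * jb j ^ (2 * b) = jb j ^ (2 * (a + b + 1)) := by ring
        linarith

/-- Bounds on the `H¹` and `H^{m+1}` norms of a coefficient sequence control all intermediate
derivatives tamely at any scale `Λ`. -/
lemma tame_of_sobolev {Λ : ℝ} (hΛ : 1 ≤ Λ) (m : ℕ) (F : Finset ℤ) (c : ℤ → ℂ) {N₁ N : ℝ}
    (h₁ : 0 ≤ N₁) (h : 0 ≤ N) (H₁ : ∑ j ∈ F, jb j ^ 2 * ‖c j‖ ^ 2 ≤ N₁ ^ 2)
    (H : ∑ j ∈ F, jb j ^ (2 * (m + 1)) * ‖c j‖ ^ 2 ≤ N ^ 2) :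
    Tame Λ m (embC * (N₁ + N / Λ ^ m)) (trigSum F c) := by
  have hΛ0 : 0 < Λ := by linarith
  refine tame_trigSum hΛ m F (by positivity) c fun a ha => ?_
  have h1 : (∑ j ∈ F, jb j ^ (2 * (a + 1)) * ‖c j‖ ^ 2) * Λ ^ (2 * m) ≤
      Λ ^ (2 * a) * (N₁ ^ 2 * Λ ^ (2 * m) + N ^ 2) := by
    calc (∑ j ∈ F, jb j ^ (2 * (a + 1)) * ‖c j‖ ^ 2) * Λ ^ (2 * m)
        = ∑ j ∈ F, (jb j ^ (2 * (a + 1)) * Λ ^ (2 * m)) * ‖c j‖ ^ 2 := by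
          rw [Finset.sum_mul]; exact Finset.sum_congr rfl fun j _ => by ring
      _ ≤ ∑ j ∈ F, (Λ ^ (2 * a) * (jb j ^ 2 * Λ ^ (2 * m) + jb j ^ (2 * (m + 1)))) *
            ‖c j‖ ^ 2 :=
          Finset.sum_le_sum fun j _ =>
            mul_le_mul_of_nonneg_right (jb_interp hΛ ha j) (sq_nonneg _)
      _ = Λ ^ (2 * a) * ((∑ j ∈ F, jb j ^ 2 * ‖c j‖ ^ 2) * Λ ^ (2 * m) +
            ∑ j ∈ F, jb j ^ (2 * (m + 1)) * ‖c j‖ ^ 2) := by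
          rw [Finset.sum_mul, ← Finset.sum_add_distrib, Finset.mul_sum]
          exact Finset.sum_congr rfl fun j _ => by ring
      _ ≤ _ := by gcongr
  have h2 : (((N₁ + N / Λ ^ m) * Λ ^ a) ^ 2) * Λ ^ (2 * m) =
      Λ ^ (2 * a) * (N₁ * Λ ^ m + N) ^ 2 := by
    field_simp
    ring
  refine le_of_mul_le_mul_right (h1.trans ?_) (by positivity : 0 < Λ ^ (2 * m))
  rw [h2]
  refine mul_le_mul_of_nonneg_left ?_ (by positivity)
  have : 0 ≤ N₁ * Λ ^ m * N := by positivity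
  have e : Λ ^ (2 * m) = (Λ ^ m) ^ 2 := by ring
  rw [e]
  nlinarith

/-- A continuous periodic function with summable Fourier coefficients is the sum of its Fourier
series. -/
lemma hasSum_fc {u : ℝ → ℂ} (hu : Continuous u) (hp : Function.Periodic u (2 * π))
    (hs : Summable fun j => ‖fc u j‖) (x : ℝ) :
    HasSum (fun j : ℤ => fc u j * Complex.exp (Complex.I * (j : ℂ) * (x : ℂ))) (u x) := by
  have : Fact (0 < 2 * π) := ⟨by positivity⟩
  let f : C(AddCircle (2 * π), ℂ) := ⟨hp.lift, continuous_quot_lift _ hu⟩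
  have hf : ∀ y : ℝ, f (y : AddCircle (2 * π)) = u y := fun y => rfl
  have hpi : (π : ℂ) ≠ 0 := by exact_mod_cast Real.pi_ne_zero
  have hc : fourierCoeff f = fc u := by
    funext j
    rw [fourierCoeff_eq_intervalIntegral _ _ 0, fc, zero_add]
    rw [Complex.real_smul]
    push_cast
    congr 1
    refine intervalIntegral.integral_congr fun y _ => ?_
    simp only [hf, smul_eq_mul, fourier_coe_apply]
    rw [mul_comm]
    congr 2
    push_cast
    field_simp
  have h := has_pointwise_sum_fourier_series_of_summable (f := f)
    (by rw [hc]; exact hs.of_norm) (x : AddCircle (2 * π))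
  rw [hf, hc] at h
  convert h using 2 with j
  simp only [smul_eq_mul, fourier_coe_apply]
  congr 2
  push_cast
  field_simp

/-! ### The truncated estimate and the passage to the limit -/

/-- The estimate for trigonometric polynomials, at a scale `Λ` with `‖p‖_{s+1} ≤ K Λ^{s-1}`,
where `s = m + 1`. -/
lemma trig_estimate (K : ℝ) (hK : 0 < K) (m : ℕ) :
    ∃ C : ℝ, 0 < C ∧ ∀ n : ℕ, 0 < n → ∀ (Λ : ℝ), 1 ≤ Λ → ∀ (F : Finset ℤ) (cp cu : ℤ → ℂ)
      (P U₁ U : ℝ), 0 ≤ P → 0 ≤ U₁ → 0 ≤ U → P ≤ K * Λ ^ m →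
      ∑ j ∈ F, jb j ^ (2 * 2) * ‖cp j‖ ^ 2 ≤ K ^ 2 →
      ∑ j ∈ F, jb j ^ (2 * (m + 2)) * ‖cp j‖ ^ 2 ≤ P ^ 2 →
      ∑ j ∈ F, jb j ^ 2 * ‖cu j‖ ^ 2 ≤ U₁ ^ 2 →
      ∑ j ∈ F, jb j ^ (2 * (m + 1)) * ‖cu j‖ ^ 2 ≤ U ^ 2 →
      (∀ x, |(trigSum F (dcoef cp) x).re| ≤ 3 / 4) →
      ‖∫ x in (0:ℝ)..(2 * π), trigSum F cu x *
        Complex.exp (Complex.I * (n : ℂ) * ((x + (trigSum F cp x).re : ℝ) : ℂ))‖ ≤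
        C / (n : ℝ) ^ (m + 1) * (U₁ * Λ ^ m + U) := by
  obtain ⟨D, hD, HD⟩ := exists_tame_inv m (embC * (2 * K))
  have hE := embC_pos
  refine ⟨(2 ^ (m + 1) * D) ^ (m + 1) * embC + 1, by positivity, ?_⟩
  intro n hn Λ hΛ F cp cu P U₁ U hP hU₁ hU hPK H2 HP HU1 HU hsmall
  have hΛ0 : 0 < Λ := by linarith
  have hd : ∀ k : ℕ, ∑ j ∈ F, jb j ^ k * ‖dcoef cp j‖ ^ 2 ≤
      ∑ j ∈ F, jb j ^ (k + 2) * ‖cp j‖ ^ 2 := fun k => Finset.sum_le_sum fun j _ => by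
    have h1 := norm_dcoef_le cp j
    have h2 := one_le_jb j
    calc jb j ^ k * ‖dcoef cp j‖ ^ 2 ≤ jb j ^ k * (jb j * ‖cp j‖) ^ 2 := by gcongr
      _ = jb j ^ (k + 2) * ‖cp j‖ ^ 2 := by ring
  have hS := smoothPer_trigSum F (dcoef cp)
  set g : ℝ → ℂ := fun x => ((trigSum F (dcoef cp) x).re : ℂ) with hg
  have hgS : SmoothPer g := hS.re
  have hgT : Tame Λ m (embC * (2 * K)) g := by
    refine Tame.re hS ((tame_of_sobolev hΛ m F (dcoef cp) hK.le hP
      ((hd 2).trans H2) ((hd _).trans HP)).mono hΛ ?_)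
    refine mul_le_mul_of_nonneg_left ?_ hE.le
    have : P / Λ ^ m ≤ K := by rwa [div_le_iff₀ (by positivity)]
    linarith
  have hlow : ∀ x, 1 / 4 ≤ 1 + (trigSum F (dcoef cp) x).re := fun x => by
    linarith [(abs_le.1 (hsmall x)).1]
  have hgn : ∀ x, 1 / 4 ≤ ‖1 + g x‖ := fun x => by
    have : 1 + g x = ((1 + (trigSum F (dcoef cp) x).re : ℝ) : ℂ) := by simp [hg]
    rw [this, Complex.norm_real, Real.norm_eq_abs]
    exact (hlow x).trans (le_abs_self _)
  have hg0 : ∀ x, 1 + g x ≠ 0 := fun x h => by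
    have := hgn x
    rw [h, norm_zero] at this
    norm_num at this
  set w : ℝ → ℂ := fun x => (1 + g x)⁻¹ with hw
  have hwS : SmoothPer w :=
    ⟨(contDiff_const.add hgS.1).inv hg0, fun x => by simp only [hw, hgS.2 x]⟩
  have hwT : Tame Λ m D w := by
    refine HD Λ hΛ g w hgS hwS (fun x => inv_mul_cancel₀ (hg0 x)) (fun x => ?_) hgT
    rw [hw, norm_inv]
    exact (inv_anti₀ (by norm_num) (hgn x)).trans (by norm_num)
  have hφ : ∀ x : ℝ, HasDerivAt (fun x : ℝ => ((x + (trigSum F cp x).re : ℝ) : ℂ)) (w x)⁻¹ x := by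
    intro x
    have h1 := Complex.reCLM.hasFDerivAt.comp_hasDerivAt x (hasDerivAt_trigSum F cp x)
    have h2 := Complex.ofRealCLM.hasFDerivAt.comp_hasDerivAt x ((hasDerivAt_id x).add h1)
    refine h2.congr_deriv ?_
    simp [hw, hg]
  have h := oscillatory_bound hΛ hn hφ (fun x => by
      rw [(smoothPer_trigSum F cp).2 x]; ring) hwS (fun x => inv_ne_zero (hg0 x)) m hwT
    (smoothPer_trigSum F cu) (tame_of_sobolev hΛ m F cu hU₁ hU HU1 HU)
  refine h.trans ?_
  have e : (2 ^ (m + 1) * D) ^ (m + 1) * (embC * (U₁ + U / Λ ^ m)) * Λ ^ m =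
      (2 ^ (m + 1) * D) ^ (m + 1) * embC * (U₁ * Λ ^ m + U) := by
    field_simp
  rw [e, div_mul_eq_mul_div]
  gcongr
  linarith

lemma jb_rpow (j : ℤ) (k : ℕ) : jb j ^ (2 * (k : ℝ)) = jb j ^ (2 * k) := by
  rw [← Real.rpow_natCast]; push_cast; rfl

lemma sobNorm_nonneg (s : ℝ) (u : ℝ → ℂ) : 0 ≤ sobNorm s u := Real.sqrt_nonneg _

lemma memHs.summable {k : ℕ} {u : ℝ → ℂ} (h : memHs (k : ℝ) u) :
    Summable fun j : ℤ => jb j ^ (2 * k) * ‖fc u j‖ ^ 2 := by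
  simpa only [memHs, jb_rpow] using h

lemma sobNorm_sq (k : ℕ) (u : ℝ → ℂ) :
    sobNorm (k : ℝ) u ^ 2 = ∑' j : ℤ, jb j ^ (2 * k) * ‖fc u j‖ ^ 2 := by
  simp only [sobNorm, jb_rpow]
  exact Real.sq_sqrt (tsum_nonneg fun j => by have := one_le_jb j; positivity)

lemma sum_le_sobNorm_sq {k : ℕ} {u : ℝ → ℂ} (h : memHs (k : ℝ) u) (F : Finset ℤ) :
    ∑ j ∈ F, jb j ^ (2 * k) * ‖fc u j‖ ^ 2 ≤ sobNorm (k : ℝ) u ^ 2 := by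
  rw [sobNorm_sq]
  exact h.summable.sum_le_tsum F fun j _ => by have := one_le_jb j; positivity

lemma memHs.of_le {k l : ℕ} (hkl : k ≤ l) {u : ℝ → ℂ} (h : memHs (l : ℝ) u) :
    memHs (k : ℝ) u := by
  simp only [memHs, jb_rpow]
  refine Summable.of_nonneg_of_le (fun j => by have := one_le_jb j; positivity) (fun j => ?_)
    h.summable
  have := one_le_jb j
  gcongr

lemma sobNorm_mono {k l : ℕ} (hkl : k ≤ l) {u : ℝ → ℂ} (h : memHs (l : ℝ) u) :
    sobNorm (k : ℝ) u ≤ sobNorm (l : ℝ) u := by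
  refine le_of_sq_le_sq ?_ (sobNorm_nonneg _ _)
  rw [sobNorm_sq, sobNorm_sq]
  refine (h.of_le hkl).summable.tsum_le_tsum (fun j => ?_) h.summable
  have := one_le_jb j
  gcongr

lemma summable_norm_of_sobolev {c : ℤ → ℂ} (h : Summable fun j => jb j ^ 2 * ‖c j‖ ^ 2) :
    Summable fun j => ‖c j‖ := by
  refine Summable.of_nonneg_of_le (fun j => norm_nonneg _) (fun j => ?_) (summable_jb.add h)
  have h1 := one_le_jb j
  have h2 : (jb j)⁻¹ * (jb j * ‖c j‖) = ‖c j‖ := by field_simp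
  have h3 := two_mul_le_add_sq (jb j)⁻¹ (jb j * ‖c j‖)
  rw [mul_assoc, h2, inv_pow, mul_pow] at h3
  linarith [norm_nonneg (c j)]

/-- Choice of the frequency scale. For `m = 0` every scale gives `Λ ^ m = 1`, hence the extra
hypothesis. -/
lemma exists_scale (m : ℕ) {X : ℝ} (hm : m = 0 → X ≤ 1) (hX : 0 ≤ X) :
    ∃ Λ : ℝ, 1 ≤ Λ ∧ X ≤ Λ ^ m ∧ Λ ^ m ≤ 1 + X := by
  rcases Nat.eq_zero_or_pos m with h | h
  · exact ⟨1, le_rfl, by simpa using hm h, by simpa using hX⟩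
  · refine ⟨(max 1 X) ^ ((m : ℝ)⁻¹), Real.one_le_rpow (le_max_left _ _) (by positivity), ?_⟩
    rw [Real.rpow_inv_natCast_pow (by positivity) (by omega)]
    exact ⟨le_max_right _ _, max_le (by linarith) (by linarith)⟩

/-- non-stationary-phase estimate. -/
theorem statement11 (K : ℝ) (hK : 0 < K) (s : ℕ) (hs : 0 < s) :
    ∃ C : ℝ, 0 < C ∧ ∀ n : ℕ, 0 < n →
      ∀ p : ℝ → ℝ, ContDiff ℝ 1 p → Function.Periodic p (2 * π) →
        memHsR 2 p → sobNormR 2 p ≤ K → (∀ x : ℝ, |deriv p x| < 1 / 2) →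
        memHsR ((s : ℝ) + 1) p →
      ∀ u : ℝ → ℂ, Continuous u → Function.Periodic u (2 * π) → memHs (s : ℝ) u →
        ‖∫ x in (0:ℝ)..(2 * π),
            u x * Complex.exp (Complex.I * (n : ℂ) * ((x + p x : ℝ) : ℂ))‖ ≤
          C / (n : ℝ) ^ s * (sobNorm (s : ℝ) u + sobNormR ((s : ℝ) + 1) p * sobNorm 1 u) := by
  obtain ⟨m, rfl⟩ : ∃ m, s = m + 1 := ⟨s - 1, by omega⟩
  obtain ⟨C, hC, HC⟩ := trig_estimate K hK m
  refine ⟨C * (2 + 1 / K), by positivity, ?_⟩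
  intro n hn p hp hpp hp2 hpK hp' hps u hu hup hus
  have cast2 : (((m + 1 : ℕ) : ℝ) + 1) = ((m + 2 : ℕ) : ℝ) := by push_cast; ring
  have castT : (2 : ℝ) = ((2 : ℕ) : ℝ) := by norm_num
  have castO : (1 : ℝ) = ((1 : ℕ) : ℝ) := by norm_num
  rw [cast2] at hps ⊢
  unfold memHsR at hps hp2
  unfold sobNormR at hpK ⊢
  rw [castT] at hp2 hpK
  have hU1s := sobNorm_mono (show 1 ≤ m + 1 by omega) hus
  rw [← castO] at hU1s
  set P := sobNorm ((m + 2 : ℕ) : ℝ) (fun x => (p x : ℂ)) with hPdef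
  set U := sobNorm ((m + 1 : ℕ) : ℝ) u with hUdef
  set U₁ := sobNorm 1 u with hU₁def
  have hP0 : 0 ≤ P := sobNorm_nonneg _ _
  have hU0 : 0 ≤ U := sobNorm_nonneg _ _
  have hU10 : 0 ≤ U₁ := sobNorm_nonneg _ _
  -- the scale: `Λ^{s-1}` is comparable to `1 + ‖p‖_{s+1} / K`
  obtain ⟨Λ, hΛ, hPΛ, hΛP⟩ := exists_scale m (X := P / K) (fun h0 => by
    rw [div_le_one hK, hPdef]; subst h0; exact hpK) (by positivity)
  rw [div_le_iff₀ hK, mul_comm] at hPΛ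
  set cp := fc (fun x => (p x : ℂ)) with hcp
  set cu := fc u with hcu
  have hus1 := hus.of_le (show 1 ≤ m + 1 by omega)
  have sumU : Summable fun j => ‖cu j‖ := summable_norm_of_sobolev hus1.summable
  have sumP : Summable fun j => ‖cp j‖ :=
    summable_norm_of_sobolev (hp2.of_le (show 1 ≤ 2 by omega)).summable
  have sumP' : Summable fun j => ‖dcoef cp j‖ := by
    refine summable_norm_of_sobolev (Summable.of_nonneg_of_le (fun j => by positivity)
      (fun j => ?_) hp2.summable)
    have h1 := norm_dcoef_le cp j
    have h2 := one_le_jb j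
    calc jb j ^ 2 * ‖dcoef cp j‖ ^ 2 ≤ jb j ^ 2 * (jb j * ‖cp j‖) ^ 2 := by gcongr
      _ = jb j ^ (2 * 2) * ‖cp j‖ ^ 2 := by ring
  have hasU := hasSum_fc hu hup sumU
  have hasP := hasSum_fc (u := fun x => (p x : ℂ)) (Complex.continuous_ofReal.comp hp.continuous)
    (fun x => by simp only [hpp x]) sumP
  have limU : ∀ x, Filter.Tendsto (fun F => trigSum F cu x) Filter.atTop (nhds (u x)) := hasU
  have limP : ∀ x, Filter.Tendsto (fun F => trigSum F cp x) Filter.atTop (nhds (p x : ℂ)) := hasP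
  have unif : TendstoUniformly (fun F => trigSum F (dcoef cp))
      (fun x => ∑' j : ℤ, dcoef cp j * Complex.exp (Complex.I * (j : ℂ) * (x : ℂ)))
      Filter.atTop :=
    tendstoUniformly_tsum sumP' fun j x => by rw [norm_mul, norm_exp_I_int, mul_one]
  have hder : ∀ x : ℝ, HasDerivAt (fun x : ℝ => (p x : ℂ))
      (∑' j : ℤ, dcoef cp j * Complex.exp (Complex.I * (j : ℂ) * (x : ℂ))) x :=
    hasDerivAt_of_tendstoUniformly unif
      (Filter.Eventually.of_forall fun F x => hasDerivAt_trigSum F cp x) limP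
  have hdere : ∀ x : ℝ, (∑' j : ℤ, dcoef cp j * Complex.exp (Complex.I * (j : ℂ) * (x : ℂ))) =
      ((deriv p x : ℝ) : ℂ) := fun x =>
    (hder x).unique ((hp.differentiable (by norm_num) x).hasDerivAt.ofReal_comp)
  simp only [hdere] at unif
  have small : ∀ᶠ F in Filter.atTop, ∀ x, |(trigSum F (dcoef cp) x).re| ≤ 3 / 4 := by
    filter_upwards [Metric.tendstoUniformly_iff.1 unif (1 / 4) (by norm_num)] with F hF x
    have h1 := hF x
    rw [dist_comm, dist_eq_norm] at h1
    have h2 := (Complex.abs_re_le_norm _).trans h1.le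
    rw [Complex.sub_re, Complex.ofReal_re] at h2
    have h3 := abs_le.1 h2
    have h4 := abs_lt.1 (hp' x)
    exact abs_le.2 ⟨by linarith, by linarith⟩
  have hexp : ∀ y : ℝ, ‖Complex.exp (Complex.I * (n : ℂ) * (y : ℂ))‖ = 1 := fun y => by
    have := norm_exp_I_int n y
    simpa using this
  have lim : Filter.Tendsto (fun F : Finset ℤ => ∫ x in (0:ℝ)..(2 * π), trigSum F cu x *
        Complex.exp (Complex.I * (n : ℂ) * ((x + (trigSum F cp x).re : ℝ) : ℂ))) Filter.atTop
      (nhds (∫ x in (0:ℝ)..(2 * π),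
        u x * Complex.exp (Complex.I * (n : ℂ) * ((x + p x : ℝ) : ℂ)))) := by
    refine intervalIntegral.tendsto_integral_filter_of_dominated_convergence
      (fun _ => ∑' j, ‖cu j‖) ?_ ?_ (by simp) ?_
    · refine Filter.Eventually.of_forall fun F => Continuous.aestronglyMeasurable ?_
      have h1 := (smoothPer_trigSum F cu).continuous
      have h2 := (smoothPer_trigSum F cp).continuous
      fun_prop
    · refine Filter.Eventually.of_forall fun F => Filter.Eventually.of_forall fun x _ => ?_
      rw [norm_mul, hexp, mul_one]
      exact (norm_trigSum_le F cu x).trans (sumU.sum_le_tsum F fun j _ => norm_nonneg _)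
    · refine Filter.Eventually.of_forall fun x _ => (limU x).mul ?_
      have h1 : Filter.Tendsto (fun F => (trigSum F cp x).re) Filter.atTop (nhds (p x)) := by
        have h := (Complex.continuous_re.tendsto _).comp (limP x)
        rwa [Complex.ofReal_re] at h
      have h2 : Continuous fun y : ℝ =>
          Complex.exp (Complex.I * (n : ℂ) * ((x + y : ℝ) : ℂ)) := by fun_prop
      exact (h2.tendsto (p x)).comp h1
  refine le_of_tendsto lim.norm ?_
  filter_upwards [small] with F hF
  have H1 := sum_le_sobNorm_sq hus1 F
  rw [← castO] at H1
  refine (HC n hn Λ hΛ F cp cu P U₁ U hP0 hU10 hU0 hPΛ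
    ((sum_le_sobNorm_sq hp2 F).trans (pow_le_pow_left₀ (sobNorm_nonneg _ _) hpK 2))
    (sum_le_sobNorm_sq hps F) (by simpa using H1) (sum_le_sobNorm_sq hus F) hF).trans ?_
  rw [div_mul_eq_mul_div, div_mul_eq_mul_div]
  refine div_le_div_of_nonneg_right ?_ (by positivity)
  rw [mul_assoc]
  refine mul_le_mul_of_nonneg_left ?_ hC.le
  calc U₁ * Λ ^ m + U ≤ U₁ * (1 + P / K) + U := by gcongr
    _ = U₁ + U + 1 / K * (P * U₁) := by ring
    _ ≤ 2 * U + 1 / K * (P * U₁) := by linarith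
    _ ≤ 2 * U + 1 / K * (P * U₁) + (1 / K * U + 2 * (P * U₁)) :=
        le_add_of_nonneg_right (by positivity)
    _ = (2 + 1 / K) * (U + P * U₁) := by ring
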